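/- Let A be a real 3×3 symmetric matrix with trace A = 0 and trace(A·A) = 1. Then 3√6·det A = 1 if and only if there exists a unit vector u ∈ ℝ³ with A = √(3/2)·(u uᵀ − (1/3)·1). Thus the maximal level set V = 1 of the Cartan–Münzner cubic on S⁴ is exactly the Veronese surface. -/

import Mathlib

open Matrix

/-!
Put `P = (1 + √6 A) / 3`. The hypotheses on `A` say that `P` is Hermitian with `tr P = tr P² = 1`,
and expanding the determinant gives `det P = (2 / 27) (3√6 det A - 1)`, so the level set is
`det P = 0`. The second elementary symmetric function of the eigenvalues of `P` vanishes, so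
`adj P = P² - P` by Cayley–Hamilton and `det P = 0` becomes `P (P² - P) = 0`. For a Hermitian matrix
this forces `P² = P`: then `P` is an orthogonal projection of trace one, that is `P = u uᴴ` for a
unit vector `u`.
-/

section CommRing

variable {R : Type*} [CommRing R]

lemma two_mul_trace_adjugate_fin_three (M : Matrix (Fin 3) (Fin 3) R) :
    2 * M.adjugate.trace = M.trace ^ 2 - (M * M).trace := by
  simp only [adjugate_fin_three, trace_fin_three, mul_apply, Fin.sum_univ_three, of_apply,
    cons_val]
  ring

lemma adjugate_fin_three_eq_mul_self_sub (M : Matrix (Fin 3) (Fin 3) R) :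
    M.adjugate = M * M - M.trace • M + M.adjugate.trace • 1 := by
  ext i j
  fin_cases i <;> fin_cases j <;>
    simp only [adjugate_fin_three, trace_fin_three, Matrix.add_apply, Matrix.sub_apply,
      Matrix.smul_apply, smul_eq_mul, mul_apply, one_apply, Fin.sum_univ_three, of_apply, cons_val,
      Fin.reduceFinMk, Fin.mk_one, Fin.zero_eta, Fin.reduceEq, reduceIte] <;>
    ring

lemma det_one_add_smul_fin_three (t : R) (M : Matrix (Fin 3) (Fin 3) R) :
    (1 + t • M).det = 1 + t * M.trace + t ^ 2 * M.adjugate.trace + t ^ 3 * M.det := by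
  simp only [det_fin_three, adjugate_fin_three, trace_fin_three, Matrix.add_apply,
    Matrix.smul_apply, smul_eq_mul, one_apply, of_apply, cons_val, Fin.reduceEq, reduceIte]
  ring

end CommRing

section StarOrderedRing

variable {R : Type*} [PartialOrder R]

lemma isStarProjection_of_det_eq_zero [CommRing R] [StarRing R] [StarOrderedRing R]
    [NoZeroDivisors R] {P : Matrix (Fin 3) (Fin 3) R} (hP : P.IsHermitian)
    (htr : P.trace = 1) (hadj : P.adjugate.trace = 0) (hdet : P.det = 0) :
    IsStarProjection P := by
  have adjugate_eq : P.adjugate = P * P - P := by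
    simpa [htr, hadj] using adjugate_fin_three_eq_mul_self_sub P
  have mul_adjugate_eq : P * (P * P - P) = 0 := by
    rw [← adjugate_eq, mul_adjugate, hdet, zero_smul]
  have conjTranspose_eq : (P * P - P)ᴴ = P * P - P := by
    rw [conjTranspose_sub, conjTranspose_mul, hP.eq]
  have mul_self_sub_eq_zero : P * P - P = 0 := conjTranspose_mul_self_eq_zero.1 <|
    calc (P * P - P)ᴴ * (P * P - P) = (P - 1) * (P * (P * P - P)) := by
          rw [conjTranspose_eq]; noncomm_ring
      _ = 0 := by rw [mul_adjugate_eq, mul_zero]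
  exact ⟨sub_eq_zero.1 mul_self_sub_eq_zero, hP⟩

lemma eq_zero_of_isStarProjection_of_trace_eq_zero {n : Type*} [Fintype n] [NonUnitalRing R]
    [StarRing R] [StarOrderedRing R] [NoZeroDivisors R] {P : Matrix n n R}
    (hP : IsStarProjection P) (htr : P.trace = 0) : P = 0 := by
  rwa [← trace_conjTranspose_mul_self_eq_zero_iff, ← star_eq_conjTranspose,
    hP.isSelfAdjoint.star_eq, hP.isIdempotentElem.eq]

end StarOrderedRing

section RCLike

variable {n 𝕜 : Type*} [Fintype n] [RCLike 𝕜]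

lemma dotProduct_star_self_eq_one_of_norm_eq_one {u : EuclideanSpace 𝕜 n} (hu : ‖u‖ = 1) :
    u.ofLp ⬝ᵥ star u.ofLp = 1 := by
  rw [← EuclideanSpace.inner_eq_star_dotProduct, inner_self_eq_one_of_norm_eq_one hu]

lemma isStarProjection_vecMulVec_star {u : EuclideanSpace 𝕜 n} (hu : ‖u‖ = 1) :
    IsStarProjection (vecMulVec u (star u.ofLp)) where
  isIdempotentElem := by
    rw [IsIdempotentElem, vecMulVec_mul_vecMulVec, dotProduct_comm,
      dotProduct_star_self_eq_one_of_norm_eq_one hu, one_smul]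
  isSelfAdjoint := by
    rw [IsSelfAdjoint, star_eq_conjTranspose, conjTranspose_vecMulVec, star_star]

lemma exists_norm_eq_one_mulVec_eq_self {P : Matrix n n 𝕜} (hP : IsIdempotentElem P)
    (hP0 : P ≠ 0) : ∃ u : EuclideanSpace 𝕜 n, ‖u‖ = 1 ∧ P *ᵥ u = u := by
  obtain ⟨v, hv⟩ : ∃ v, P *ᵥ v ≠ 0 := by
    contrapose! hP0
    exact mulVec_injective (funext fun v => by rw [hP0, zero_mulVec])
  let w : EuclideanSpace 𝕜 n := WithLp.toLp 2 (P *ᵥ v)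
  have hw : w ≠ 0 := by simpa [w] using hv
  refine ⟨(‖w‖⁻¹ : 𝕜) • w, norm_smul_inv_norm hw, ?_⟩
  rw [WithLp.ofLp_smul, mulVec_smul, mulVec_mulVec, hP.eq]

open scoped ComplexOrder in
-- Removing from `P` the projection onto a unit vector of its range leaves a projection of trace 0.
lemma exists_eq_vecMulVec_star_of_trace_eq_one {P : Matrix n n 𝕜} (hP : IsStarProjection P)
    (htr : P.trace = 1) :
    ∃ u : EuclideanSpace 𝕜 n, ‖u‖ = 1 ∧ P = vecMulVec u (star u.ofLp) := by
  have hP0 : P ≠ 0 := by rintro rfl; simp at htr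
  obtain ⟨u, hu, hPu⟩ := exists_norm_eq_one_mulVec_eq_self hP.isIdempotentElem hP0
  have hsub : IsStarProjection (P - vecMulVec u (star u.ofLp)) :=
    (isStarProjection_vecMulVec_star hu).sub_of_mul_eq_right hP (by rw [mul_vecMulVec, hPu])
  have htrace : (P - vecMulVec u (star u.ofLp)).trace = 0 := by
    rw [trace_sub, trace_vecMulVec, dotProduct_star_self_eq_one_of_norm_eq_one hu, htr, sub_self]
  exact ⟨u, hu, sub_eq_zero.1 (eq_zero_of_isStarProjection_of_trace_eq_zero hsub htrace)⟩

open scoped ComplexOrder in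
lemma det_eq_zero_iff_exists_eq_vecMulVec_star {P : Matrix (Fin 3) (Fin 3) 𝕜} (hP : P.IsHermitian)
    (htr : P.trace = 1) (hadj : P.adjugate.trace = 0) :
    P.det = 0 ↔ ∃ u : EuclideanSpace 𝕜 (Fin 3), ‖u‖ = 1 ∧ P = vecMulVec u (star u.ofLp) := by
  constructor
  · exact fun hdet => exists_eq_vecMulVec_star_of_trace_eq_one
      (isStarProjection_of_det_eq_zero hP htr hadj hdet) htr
  · rintro ⟨u, -, rfl⟩
    exact det_vecMulVec _ _

lemma ofReal_sqrt_six_sq : ((√6 : ℝ) : 𝕜) ^ 2 = 6 := by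
  rw [← RCLike.ofReal_pow, Real.sq_sqrt (by norm_num), RCLike.ofReal_ofNat]

lemma ofReal_sqrt_three_halves_mul_sqrt_six : ((√(3 / 2) : ℝ) : 𝕜) * ((√6 : ℝ) : 𝕜) = 3 := by
  have : √(3 / 2) * √6 = (3 : ℝ) := by
    rw [← Real.sqrt_mul (by norm_num), Real.sqrt_eq_iff_mul_self_eq] <;> norm_num
  exact_mod_cast congrArg (RCLike.ofReal (K := 𝕜)) this

/-- The affine change of variable `A ↦ (1 + √6 A) / 3`, inverse to `P ↦ √(3/2) (P - 1/3)`. It turns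
a Veronese point `√(3/2) (u uᴴ - 1/3)` into the rank-one matrix `u uᴴ`. -/
noncomputable def toTraceOne (A : Matrix (Fin 3) (Fin 3) 𝕜) : Matrix (Fin 3) (Fin 3) 𝕜 :=
  (3 : 𝕜)⁻¹ • (1 + ((√6 : ℝ) : 𝕜) • A)

section toTraceOne

variable {A : Matrix (Fin 3) (Fin 3) 𝕜}

lemma isHermitian_toTraceOne (hA : A.IsHermitian) : (toTraceOne A).IsHermitian := by
  simp [toTraceOne, IsHermitian, hA.eq]

lemma toTraceOne_eq_iff {P : Matrix (Fin 3) (Fin 3) 𝕜} :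
    toTraceOne A = P ↔ A = ((√(3 / 2) : ℝ) : 𝕜) • (P - (1 / 3 : 𝕜) • 1) := by
  have h := ofReal_sqrt_three_halves_mul_sqrt_six (𝕜 := 𝕜)
  constructor
  · rintro rfl
    rw [toTraceOne]
    linear_combination (norm := module) (-h / 3) • A
  · rintro rfl
    rw [toTraceOne]
    linear_combination (norm := module) (h / 3) • (P - (1 / 3 : 𝕜) • (1 : Matrix (Fin 3) (Fin 3) 𝕜))

lemma trace_toTraceOne (htr : A.trace = 0) : (toTraceOne A).trace = 1 := by
  simp [toTraceOne, htr]

lemma trace_toTraceOne_mul_self (htr : A.trace = 0) (hnorm : (A * A).trace = 1) :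
    (toTraceOne A * toTraceOne A).trace = 1 := by
  have hs := ofReal_sqrt_six_sq (𝕜 := 𝕜)
  simp only [toTraceOne, smul_mul_smul_comm, add_mul, mul_add, one_mul, mul_one, trace_smul,
    trace_add, trace_one, htr, hnorm, Fintype.card_fin, smul_eq_mul]
  linear_combination hs / 9

lemma trace_adjugate_toTraceOne (htr : A.trace = 0) (hnorm : (A * A).trace = 1) :
    (toTraceOne A).adjugate.trace = 0 := by
  simpa [trace_toTraceOne htr, trace_toTraceOne_mul_self htr hnorm] using
    two_mul_trace_adjugate_fin_three (toTraceOne A)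

lemma det_toTraceOne (htr : A.trace = 0) (hnorm : (A * A).trace = 1) :
    (toTraceOne A).det = 2 / 27 * (3 * ((√6 : ℝ) : 𝕜) * A.det - 1) := by
  have hs := ofReal_sqrt_six_sq (𝕜 := 𝕜)
  have hadj := two_mul_trace_adjugate_fin_three A
  rw [htr, hnorm] at hadj
  rw [toTraceOne, det_smul, det_one_add_smul_fin_three, htr, Fintype.card_fin]
  linear_combination (((√6 : ℝ) : 𝕜) * A.det + A.adjugate.trace) / 27 * hs + hadj / 9

end toTraceOne

theorem top_level_set_eq_veronese_surface_general {A : Matrix (Fin 3) (Fin 3) 𝕜}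
    (hA : A.IsHermitian) (htr : A.trace = 0) (hnorm : (A * A).trace = 1) :
    3 * ((√6 : ℝ) : 𝕜) * A.det = 1 ↔
      ∃ u : EuclideanSpace 𝕜 (Fin 3), ‖u‖ = 1 ∧
        A = ((√(3 / 2) : ℝ) : 𝕜) • (vecMulVec u (star u.ofLp) - (1 / 3 : 𝕜) • 1) :=
  calc 3 * ((√6 : ℝ) : 𝕜) * A.det = 1
      ↔ (toTraceOne A).det = 0 := by simp [det_toTraceOne htr hnorm, sub_eq_zero]
    _ ↔ ∃ u : EuclideanSpace 𝕜 (Fin 3), ‖u‖ = 1 ∧ toTraceOne A = vecMulVec u (star u.ofLp) :=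
        det_eq_zero_iff_exists_eq_vecMulVec_star (isHermitian_toTraceOne hA)
          (trace_toTraceOne htr) (trace_adjugate_toTraceOne htr hnorm)
    _ ↔ _ := by simp only [toTraceOne_eq_iff]

end RCLike

/-- For a traceless symmetric real 3×3 matrix of unit Frobenius norm, `3√6 · det A = 1`
holds if and only if `A = √(3/2)·(u uᵀ − (1/3)·1)` for some unit vector `u ∈ ℝ³`: the
maximal level set `V = 1` of the Cartan–Münzner cubic on `S⁴` is exactly the Veronese
surface. -/
theorem top_level_set_eq_veronese_surface
    (A : Matrix (Fin 3) (Fin 3) ℝ) (hsymm : Aᵀ = A) (htr : A.trace = 0)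
    (hnorm : (A * A).trace = 1) :
    3 * Real.sqrt 6 * A.det = 1 ↔
      ∃ u : EuclideanSpace ℝ (Fin 3), ‖u‖ = 1 ∧
        A = Real.sqrt (3 / 2) •
          (Matrix.of (fun i j => u i * u j) - (1 / 3 : ℝ) • (1 : Matrix (Fin 3) (Fin 3) ℝ)) := by
  simpa [vecMulVec] using
    top_level_set_eq_veronese_surface_general (isHermitian_iff_isSymm.2 hsymm) htr hnorm
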